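/- Let A be a Noetherian commutative ring which is I-adically complete for an ideal I ⊆ A. Let B be a Noetherian A-algebra which is flat as an A-module and which is (I·B)-adically complete, and assume that the induced homomorphism A/I → B/IB is smooth (of finite presentation and formally smooth). Then the (I·B)-adic completion of the module of Kähler differentials Ω_{B/A} is a finitely generated projective B-module. -/

import Mathlib

/-!
Write `J = I B` and `Ω = Ω[B⁄A]`. Formal smoothness lifts along the square-zero thickenings
`A ⧸ I ^ (n + 1) → A ⧸ I ^ n` because `B` is flat, so every `Ω ⧸ J ^ n Ω`, being the module of
differentials of `B ⧸ J ^ n` over `A ⧸ I ^ n`, is projective over `B ⧸ J ^ n`. Choose a map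
`f : F → Ω` from a finite free module that is surjective modulo `J`. Projectivity modulo `J ^ n`
yields compatible maps `Ω → F ⧸ J ^ n F` splitting `f` modulo `J ^ n`; as `F` is `J`-adically
complete, they assemble to a map `s : Ω → F` with `f ∘ s ≡ id` modulo every `J ^ n`. Completing,
the completion of `Ω` is a direct summand of the completion of `F`, which is `F`.
-/

open TensorProduct Submodule

section AdicSplitting

variable {R : Type*} [CommRing R] {J : Ideal R}
  {M : Type*} [AddCommGroup M] [Module R M] {F : Type*} [AddCommGroup F] [Module R F]

theorem isAdicComplete_pi {ι : Type*} [Finite ι] (N : ι → Type*) [∀ i, AddCommGroup (N i)]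
    [∀ i, Module R (N i)] [∀ i, IsAdicComplete J (N i)] : IsAdicComplete J (∀ i, N i) := by
  classical
  have := Fintype.ofFinite ι
  have hcomp : AdicCompletion.piEquivOfFintype J N ∘ AdicCompletion.of J (∀ i, N i) =
      Pi.map fun i ↦ AdicCompletion.of J (N i) := by
    ext x i n
    simp only [Function.comp_apply, AdicCompletion.piEquivOfFintype_apply]
    rfl
  rw [← AdicCompletion.of_bijective_iff,
    ← Function.Bijective.of_comp_iff' (AdicCompletion.piEquivOfFintype J N).bijective, hcomp]
  exact .piMap fun i ↦ AdicCompletion.of_bijective J (N i)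

theorem projective_lifting_property_of_isTorsionBySet {K : Ideal R}
    [Module.Projective (R ⧸ K) ((R ⧸ K) ⊗[R] M)]
    {X Y : Type*} [AddCommGroup X] [Module R X] [AddCommGroup Y] [Module R Y]
    (hX : Module.IsTorsionBySet R X K) (f : X →ₗ[R] Y) (g : M →ₗ[R] Y)
    (hf : Function.Surjective f) : ∃ k : M →ₗ[R] X, f ∘ₗ k = g := by
  have hY : Module.IsTorsionBySet R Y K := fun y b ↦ by
    obtain ⟨x, rfl⟩ := hf y
    rw [← map_smul, hX, map_zero]
  let : Module (R ⧸ K) X := hX.module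
  let : Module (R ⧸ K) Y := hY.module
  have : IsScalarTower R (R ⧸ K) X := hX.isScalarTower
  have : IsScalarTower R (R ⧸ K) Y := hY.isScalarTower
  let f' : X →ₗ[R ⧸ K] Y := f.extendScalarsOfSurjective Ideal.Quotient.mk_surjective
  obtain ⟨k, hk⟩ := Module.projective_lifting_property f' (g.liftBaseChange (R ⧸ K)) hf
  refine ⟨k.restrictScalars R ∘ₗ TensorProduct.mk R (R ⧸ K) M 1, LinearMap.ext fun x ↦ ?_⟩
  simpa [f'] using LinearMap.congr_fun hk (1 ⊗ₜ x)

/-- The linear map `s : M → F ⧸ J ^ n F` is a section of `f : F → M` modulo `J ^ n`: the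
composite `M → F ⧸ J ^ n F → M ⧸ J ^ n M` is the quotient map. -/
def IsSectionModPow (J : Ideal R) (f : F →ₗ[R] M) (n : ℕ)
    (s : M →ₗ[R] F ⧸ (J ^ n • ⊤ : Submodule R F)) : Prop :=
  (f.reduceModIdeal (J ^ n)).restrictScalars R ∘ₗ s = mkQ (J ^ n • ⊤)

variable {f : F →ₗ[R] M}

theorem IsSectionModPow.exists_succ {n : ℕ}
    [Module.Projective (R ⧸ J ^ (n + 1)) ((R ⧸ J ^ (n + 1)) ⊗[R] M)]
    (hf : Function.Surjective (mkQ (J • ⊤) ∘ₗ f))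
    {s : M →ₗ[R] F ⧸ (J ^ n • ⊤ : Submodule R F)} (hs : IsSectionModPow J f n s) :
    ∃ t, IsSectionModPow J f (n + 1) t ∧ factorPowSucc J F n ∘ₗ t = s := by
  let φ := ((f.reduceModIdeal (J ^ (n + 1))).restrictScalars R).prod (factorPowSucc J F n)
  -- By surjectivity modulo `J`, the range of `φ` contains the fibre product over `M ⧸ J ^ n M`.
  have hrange (x : M) : (mkQ _).prod s x ∈ LinearMap.range φ := by
    obtain ⟨y, hy⟩ := mkQ_surjective _ (s x)
    have hyx : f y ≡ x [SMOD (J ^ n • ⊤ : Submodule R M)] := by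
      have := LinearMap.congr_fun hs x
      rwa [LinearMap.comp_apply, ← hy] at this
    obtain ⟨z, hyz, hzx⟩ :=
      AdicCompletion.exists_smodEq_pow_smul_top_and_smodEq_pow_add_one_smul_top hf hyx
    exact ⟨mkQ _ z, Prod.ext hzx ((SModEq.def.mp hyz).symm.trans hy)⟩
  obtain ⟨t, ht⟩ := projective_lifting_property_of_isTorsionBySet
    (Module.isTorsionBySet_quotient_ideal_smul F (J ^ (n + 1))) φ.rangeRestrict
    (LinearMap.codRestrict _ _ hrange) φ.surjective_rangeRestrict
  have hφt (x : M) : φ (t x) = (mkQ _ x, s x) := congrArg Subtype.val (LinearMap.congr_fun ht x)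
  exact ⟨t, LinearMap.ext fun x ↦ congrArg Prod.fst (hφt x),
    LinearMap.ext fun x ↦ congrArg Prod.snd (hφt x)⟩

theorem exists_compatible_isSectionModPow
    [∀ n, Module.Projective (R ⧸ J ^ (n + 1)) ((R ⧸ J ^ (n + 1)) ⊗[R] M)]
    (hf : Function.Surjective (mkQ (J • ⊤) ∘ₗ f)) :
    ∃ s : ∀ n, M →ₗ[R] F ⧸ (J ^ n • ⊤ : Submodule R F),
      (∀ n, IsSectionModPow J f n (s n)) ∧
        ∀ {m n : ℕ} (hmn : m ≤ n), factorPow J F hmn ∘ₗ s n = s m := by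
  have : Subsingleton (M ⧸ (J ^ 0 • ⊤ : Submodule R M)) := by
    simp [Submodule.Quotient.subsingleton_iff]
  have hzero : IsSectionModPow J f 0 0 := LinearMap.ext fun _ ↦ Subsingleton.elim _ _
  choose lift hlift hfactor using fun (n : ℕ) (s : {s // IsSectionModPow J f n s}) ↦
    s.2.exists_succ hf
  let s (n : ℕ) : {s // IsSectionModPow J f n s} :=
    n.rec ⟨0, hzero⟩ fun n s ↦ ⟨lift n s, hlift n s⟩
  refine ⟨fun n ↦ (s n).1, fun n ↦ (s n).2, fun hmn ↦ LinearMap.ext fun x ↦ ?_⟩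
  exact (eq_factor_of_eq_factor_succ (fun _ _ h ↦ pow_smul_top_le J F h) (fun n ↦ (s n).1 x)
    (fun n ↦ (LinearMap.congr_fun (hfactor n (s n)) x).symm) hmn).symm

theorem exists_mkQ_pow_comp_comp_eq_mkQ [IsAdicComplete J F]
    [∀ n, Module.Projective (R ⧸ J ^ (n + 1)) ((R ⧸ J ^ (n + 1)) ⊗[R] M)]
    (hf : Function.Surjective (mkQ (J • ⊤) ∘ₗ f)) :
    ∃ s : M →ₗ[R] F, ∀ n, mkQ (J ^ n • ⊤) ∘ₗ f ∘ₗ s = mkQ (J ^ n • ⊤) := by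
  obtain ⟨s, hsec, hcompat⟩ := exists_compatible_isSectionModPow hf
  refine ⟨IsAdicComplete.lift J s hcompat, fun n ↦ ?_⟩
  refine Eq.trans ?_ (hsec n)
  rw [← IsAdicComplete.mkQ_comp_lift J hcompat n]
  rfl

theorem adicCompletion_map_comp_map_eq_id {s : M →ₗ[R] F}
    (hs : ∀ n, mkQ (J ^ n • ⊤) ∘ₗ f ∘ₗ s = mkQ (J ^ n • ⊤)) :
    AdicCompletion.map J f ∘ₗ AdicCompletion.map J s = LinearMap.id := by
  rw [AdicCompletion.map_comp]
  refine AdicCompletion.map_ext' J fun a ↦ AdicCompletion.ext fun n ↦ ?_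
  exact LinearMap.congr_fun (hs n) (a n)

theorem exists_surjective_mkQ_comp_of_finite_quotient_tensor
    [Module.Finite (R ⧸ J) ((R ⧸ J) ⊗[R] M)] :
    ∃ (m : ℕ) (f : (Fin m → R) →ₗ[R] M),
      Function.Surjective (mkQ (J • ⊤ : Submodule R M) ∘ₗ f) := by
  have : Module.Finite R ((R ⧸ J) ⊗[R] M) := .trans (R ⧸ J) _
  have : Module.Finite R (M ⧸ (J • ⊤ : Submodule R M)) :=
    .equiv (TensorProduct.quotTensorEquivQuotSMul M J)
  obtain ⟨m, p, hp⟩ := Module.Finite.exists_fin' R (M ⧸ (J • ⊤ : Submodule R M))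
  obtain ⟨f, rfl⟩ := Module.projective_lifting_property (mkQ _) p (mkQ_surjective _)
  exact ⟨m, f, hp⟩

theorem adicCompletion_finite_and_projective [IsAdicComplete J R]
    [Module.Finite (R ⧸ J) ((R ⧸ J) ⊗[R] M)]
    [∀ n, Module.Projective (R ⧸ J ^ (n + 1)) ((R ⧸ J ^ (n + 1)) ⊗[R] M)] :
    Module.Finite R (AdicCompletion J M) ∧ Module.Projective R (AdicCompletion J M) := by
  obtain ⟨m, f, hf⟩ := exists_surjective_mkQ_comp_of_finite_quotient_tensor (J := J) (M := M)
  have : IsAdicComplete J (Fin m → R) := isAdicComplete_pi _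
  obtain ⟨s, hs⟩ := exists_mkQ_pow_comp_comp_eq_mkQ hf
  let e := AdicCompletion.ofLinearEquiv J (Fin m → R)
  let i : AdicCompletion J M →ₗ[R] Fin m → R :=
    e.symm ∘ₗ (AdicCompletion.map J s).restrictScalars R
  let p : (Fin m → R) →ₗ[R] AdicCompletion J M := (AdicCompletion.map J f).restrictScalars R ∘ₗ e
  have hpi : p ∘ₗ i = LinearMap.id := LinearMap.ext fun x ↦ by
    simpa [p, i] using LinearMap.congr_fun (adicCompletion_map_comp_map_eq_id hs) x
  exact ⟨.of_surjective p (LinearMap.surjective_of_comp_eq_id i p hpi), .of_split i p hpi⟩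

end AdicSplitting

section Quotient

variable {A B : Type*} [CommRing A] [CommRing B] [Algebra A B]

theorem isPushout_quotient_map (L : Ideal A) :
    Algebra.IsPushout A (A ⧸ L) B (B ⧸ L.map (algebraMap A B)) where
  out := .of_equiv (Algebra.TensorProduct.quotIdealMapEquivQuotTensor B L).symm.toLinearEquiv
    fun x ↦ (Algebra.TensorProduct.quotIdealMapEquivQuotTensor B L).symm_apply_apply
      (Ideal.Quotient.mk _ x)

theorem formallySmooth_quotient_map_of_sq_le [Module.Flat A B] {I K : Ideal A}
    (hKI : K ≤ I) (hIK : I ^ 2 ≤ K)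
    (hsmooth : Algebra.FormallySmooth (A ⧸ I) (B ⧸ I.map (algebraMap A B))) :
    Algebra.FormallySmooth (A ⧸ K) (B ⧸ K.map (algebraMap A B)) := by
  have hmap := Ideal.map_mono (f := algebraMap A B) hKI
  have hflat : Module.Flat (A ⧸ K) (B ⧸ K.map (algebraMap A B)) :=
    .isBaseChange _ _ _ _ (isPushout_quotient_map K).out
  have hsq : RingHom.ker (Ideal.Quotient.factor hKI) ^ 2 = ⊥ := by
    rw [Ideal.Quotient.factor_ker, ← Ideal.map_pow, Ideal.map_eq_bot_iff_le_ker, Ideal.mk_ker]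
    exact hIK
  have hker : RingHom.ker (Ideal.Quotient.factor hmap) =
      (RingHom.ker (Ideal.Quotient.factor hKI)).map (algebraMap _ _) := by
    rw [Ideal.Quotient.factor_ker, Ideal.Quotient.factor_ker, Ideal.map_map, Ideal.map_map]
    rfl
  rw [← RingHom.formallySmooth_algebraMap] at hsmooth ⊢
  exact .of_flat_of_ker_eq_map_of_square_zero _ ((RingHom.flat_algebraMap_iff).mpr hflat)
    (Ideal.Quotient.factor hKI) (Ideal.Quotient.factor hmap) _
    (Ideal.Quotient.factor_surjective hKI) (Ideal.Quotient.factor_surjective hmap)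
    (Ideal.Quotient.ringHom_ext rfl) hsq hker hsmooth

theorem formallySmooth_quotient_map_pow_succ [Module.Flat A B] (I : Ideal A)
    [hsmooth : Algebra.FormallySmooth (A ⧸ I) (B ⧸ I.map (algebraMap A B))] (n : ℕ) :
    Algebra.FormallySmooth (A ⧸ I ^ (n + 1)) (B ⧸ (I ^ (n + 1)).map (algebraMap A B)) := by
  induction n with
  | zero =>
    exact formallySmooth_quotient_map_of_sq_le (Ideal.pow_le_self one_ne_zero)
      (Ideal.pow_le_pow_right one_le_two) hsmooth
  | succ n ih =>
    refine formallySmooth_quotient_map_of_sq_le (Ideal.pow_le_pow_right n.succ.le_succ) ?_ ih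
    rw [← pow_mul]
    exact Ideal.pow_le_pow_right (by lia)

end Quotient

section KaehlerDifferential

variable (R S A B : Type*) [CommRing R] [CommRing S] [CommRing A] [CommRing B]
  [Algebra R S] [Algebra R A] [Algebra R B] [Algebra S B] [Algebra A B]
  [IsScalarTower R S B] [IsScalarTower R A B] [Algebra.IsPushout R S A B]

theorem projective_tensorProduct_kaehlerDifferential [Algebra.FormallySmooth S B] :
    Module.Projective B (B ⊗[A] Ω[A⁄R]) :=
  .of_equiv (KaehlerDifferential.tensorKaehlerEquiv R S A B).symm

theorem finite_tensorProduct_kaehlerDifferential [Algebra.EssFiniteType S B] :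
    Module.Finite B (B ⊗[A] Ω[A⁄R]) :=
  .equiv (KaehlerDifferential.tensorKaehlerEquiv R S A B).symm

end KaehlerDifferential

theorem stmt12_general {A B : Type*} [CommRing A] [CommRing B] [Algebra A B] (I : Ideal A)
    [Module.Flat A B] [IsAdicComplete (I.map (algebraMap A B)) B]
    [Algebra.FormallySmooth (A ⧸ I) (B ⧸ I.map (algebraMap A B))]
    [Algebra.EssFiniteType (A ⧸ I) (B ⧸ I.map (algebraMap A B))] :
    Module.Finite B (AdicCompletion (I.map (algebraMap A B)) Ω[B⁄A]) ∧
      Module.Projective B (AdicCompletion (I.map (algebraMap A B)) Ω[B⁄A]) := by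
  have hpushout (L : Ideal A) := isPushout_quotient_map (B := B) L
  have hfinite := finite_tensorProduct_kaehlerDifferential A (A ⧸ I) B
    (B ⧸ I.map (algebraMap A B))
  have hprojective (n : ℕ) : Module.Projective (B ⧸ I.map (algebraMap A B) ^ (n + 1))
      ((B ⧸ I.map (algebraMap A B) ^ (n + 1)) ⊗[B] Ω[B⁄A]) := by
    have := formallySmooth_quotient_map_pow_succ (B := B) I n
    rw [← Ideal.map_pow]
    exact projective_tensorProduct_kaehlerDifferential A (A ⧸ I ^ (n + 1)) B _
  exact adicCompletion_finite_and_projective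

/-- Let `A` be noetherian and `I`-adically complete, and `B` a noetherian `A`-algebra, flat as an
`A`-module and `(I·B)`-adically complete, such that the induced homomorphism `A/I → B/IB` is
smooth. (These hypotheses say that `Spf B → Spf A` is an adic smooth morphism of affine
noetherian formal schemes.) Then the `(I·B)`-adic completion of `Ω_{B/A}` is a finitely
generated projective `B`-module. -/
theorem stmt12 {A B : Type} [CommRing A] [CommRing B] [Algebra A B]
    [IsNoetherianRing A] [IsNoetherianRing B] (I : Ideal A)
    [IsAdicComplete I A] [Module.Flat A B]
    [IsAdicComplete (I.map (algebraMap A B)) B]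
    [Algebra.Smooth (A ⧸ I) (B ⧸ I.map (algebraMap A B))] :
    Module.Finite B
        (AdicCompletion (I.map (algebraMap A B)) (KaehlerDifferential A B)) ∧
      Module.Projective B
        (AdicCompletion (I.map (algebraMap A B)) (KaehlerDifferential A B)) := by
  exact stmt12_general I
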